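/- Let (T, Λ) be a cookie cutter system, let ψ : Λ → ℝ be Hölder continuous, let μ be a normalized Gibbs measure for ψ, and let δ denote the Hausdorff dimension of Λ. If ψ − δφ is cohomologous to zero (there is a continuous h : Λ → ℝ with ψ − δφ = h∘T − h on Λ), then for every x ∈ Λ the local dimension of μ at x exists and equals δ, i.e. lim_{r→0⁺} log μ(B_r(x)) / log r = δ, where B_r(x) is the open ball of radius r centred at x. -/

import Mathlib

/-!
For a cookie cutter, write `a n = exp (φⁿ x) = ∏_{m<n} |T' (T^m x)|⁻¹`. Bounded distortion
(`dist_bounds`) says that a point `y` sharing the first `n` itinerary symbols of `x` satisfies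
`|y - x| ≍ a n * |T^n y - T^n x|`, uniformly in `n`. Hence the basic set of level `n` around `x` lies
in a ball of radius comparable to `a n`, and, because distinct first level intervals are separated
by a positive gap, a ball of radius a small multiple of `a n` meets `Λ` only inside the basic set of
level `n + 1` (`sameItin_of_close`).

If `ψ = δ φ + h ∘ T - h` on `Λ`, then `ψⁿ x = δ φⁿ x + h (Tⁿ x) - h x`, and `h` is bounded on the
compact set `Λ`, so the Gibbs property gives `μ (I_n) ≍ (a n) ^ δ`. As consecutive `a n` have bounded
ratio, `μ (B_r x) ≍ r ^ δ` for all small `r`, and taking logarithms gives the local dimension.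
-/

open MeasureTheory Set

/-- A cookie cutter system: `k ≥ 2` pairwise disjoint closed intervals
`[u j, v j] ⊆ [0,1]`, each mapped bijectively onto `[0,1]` by `T`, with
`T` differentiable with `ε`-Hölder derivative `T'` satisfying `|T'| ≥ lam > 1`. -/
structure CookieCutter where
  k : ℕ
  two_le_k : 2 ≤ k
  u : Fin k → ℝ
  v : Fin k → ℝ
  T : ℝ → ℝ
  T' : ℝ → ℝ
  lam : ℝ
  eps : ℝ
  Ceps : ℝ
  nondeg : ∀ j, u j < v j
  subset_unit : ∀ j, Icc (u j) (v j) ⊆ Icc (0:ℝ) 1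
  pair_disj : Pairwise fun i j => Disjoint (Icc (u i) (v i)) (Icc (u j) (v j))
  bijOn : ∀ j, BijOn T (Icc (u j) (v j)) (Icc (0:ℝ) 1)
  hasDeriv : ∀ x ∈ ⋃ j, Icc (u j) (v j),
    HasDerivWithinAt T (T' x) (⋃ j, Icc (u j) (v j)) x
  eps_pos : 0 < eps
  Ceps_nonneg : 0 ≤ Ceps
  holder : ∀ x ∈ ⋃ j, Icc (u j) (v j), ∀ y ∈ ⋃ j, Icc (u j) (v j),
    |T' x - T' y| ≤ Ceps * |x - y| ^ eps
  one_lt_lam : 1 < lam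
  expanding : ∀ x ∈ ⋃ j, Icc (u j) (v j), lam ≤ |T' x|

/-- The length of a (bounded) interval `I ⊆ ℝ`. -/
noncomputable def setLen (I : Set ℝ) : ℝ := sSup I - sInf I

namespace CookieCutter

variable (S : CookieCutter)

/-- The domain `I_1 ∪ ⋯ ∪ I_k` of the cookie cutter map. -/
def domain : Set ℝ := ⋃ j, Icc (S.u j) (S.v j)

/-- The set `T^{-n}([0,1])`: points whose first `n` iterates stay in the domain. -/
def level (n : ℕ) : Set ℝ := {x | ∀ m < n, S.T^[m] x ∈ S.domain}

/-- `I` is an `n`-th level basic set, i.e. a connected component of `T^{-n}([0,1])`. -/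
def IsBasic (n : ℕ) (I : Set ℝ) : Prop :=
  ∃ x ∈ S.level n, I = connectedComponentIn (S.level n) x

/-- The repeller `Λ = ⋂_{n ≥ 0} T^{-n}([0,1])`. -/
def repeller : Set ℝ := {x | ∀ n, S.T^[n] x ∈ S.domain}

/-- The function `φ = - log |T'|`. -/
noncomputable def phi (x : ℝ) : ℝ := - Real.log |S.T' x|

/-- The Birkhoff sum `fⁿ(x) = Σ_{j<n} f(T^j x)`. -/
noncomputable def birkhoff (f : ℝ → ℝ) (n : ℕ) (x : ℝ) : ℝ :=
  ∑ j ∈ Finset.range n, f (S.T^[j] x)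

/-- `f` is Hölder continuous on the set `A`. -/
def IsHolderOn (f : ℝ → ℝ) (A : Set ℝ) : Prop :=
  ∃ β C : ℝ, 0 < β ∧ β ≤ 1 ∧ 0 ≤ C ∧ ∀ x ∈ A, ∀ y ∈ A, |f x - f y| ≤ C * |x - y| ^ β

/-- `μ` is a normalized Gibbs measure for the potential `ψ`: a Borel probability
measure on the repeller with `C ≤ μ(I_n^i)/e^{ψⁿ(x)} ≤ D` for every basic set. -/
def IsGibbs (ψ : ℝ → ℝ) (μ : Measure ℝ) : Prop :=
  IsProbabilityMeasure μ ∧ μ S.repellerᶜ = 0 ∧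
    ∃ C D : ℝ, 0 < C ∧ 0 < D ∧
      ∀ n, 1 ≤ n → ∀ I, S.IsBasic n I → ∀ x ∈ I ∩ S.repeller,
        C * Real.exp (S.birkhoff ψ n x) ≤ (μ I).toReal ∧
          (μ I).toReal ≤ D * Real.exp (S.birkhoff ψ n x)

/-- `ν` is a `T`-invariant Borel probability measure on the repeller. -/
def IsInvariantProb (ν : Measure ℝ) : Prop :=
  IsProbabilityMeasure ν ∧ ν S.repellerᶜ = 0 ∧
    ∀ A, MeasurableSet A → ν (S.T ⁻¹' A) = ν A

end CookieCutter

open Filter Topology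

namespace CookieCutter

variable (S : CookieCutter)

/-- `x` and `y` lie in the same first level interval along their first `n` iterates. -/
def SameItin (n : ℕ) (x y : ℝ) : Prop :=
  ∀ m < n, ∃ j, S.T^[m] x ∈ Icc (S.u j) (S.v j) ∧ S.T^[m] y ∈ Icc (S.u j) (S.v j)

lemma sameItin_succ {n : ℕ} {x y : ℝ} : S.SameItin (n + 1) x y ↔
    (∃ j, x ∈ Icc (S.u j) (S.v j) ∧ y ∈ Icc (S.u j) (S.v j)) ∧ S.SameItin n (S.T x) (S.T y) := by
  constructor
  · intro H
    refine ⟨by simpa using H 0 (by omega), fun m hm => ?_⟩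
    simpa [Function.iterate_succ_apply] using H (m + 1) (by omega)
  · rintro ⟨h0, H⟩ m hm
    cases m with
    | zero => simpa using h0
    | succ m => simpa [Function.iterate_succ_apply] using H m (by omega)

lemma Icc_subset_domain (j : Fin S.k) : Icc (S.u j) (S.v j) ⊆ S.domain :=
  subset_iUnion (fun j => Icc (S.u j) (S.v j)) j

lemma domain_subset_unit : S.domain ⊆ Icc 0 1 := iUnion_subset S.subset_unit

lemma continuousOn_T : ContinuousOn S.T S.domain :=
  fun x hx => (S.hasDeriv x hx).continuousWithinAt

lemma lam_pos : 0 < S.lam := zero_lt_one.trans S.one_lt_lam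

lemma repeller_subset_domain : S.repeller ⊆ S.domain := fun _ hx => hx 0

lemma iterate_mem_repeller {x : ℝ} (hx : x ∈ S.repeller) (n : ℕ) : S.T^[n] x ∈ S.repeller := by
  intro m
  rw [← Function.iterate_add_apply]
  exact hx _

/-! ### Topology of the basic sets and of the repeller -/

lemma isClosed_domain : IsClosed S.domain := isClosed_iUnion_of_finite fun _ => isClosed_Icc

lemma level_succ (n : ℕ) : S.level (n + 1) = S.domain ∩ S.T ⁻¹' S.level n := by
  ext x
  constructor
  · intro H
    refine ⟨H 0 (by omega), fun m hm => ?_⟩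
    simpa [Function.iterate_succ_apply] using H (m + 1) (by omega)
  · rintro ⟨h0, H⟩ m hm
    cases m with
    | zero => simpa using h0
    | succ m => simpa [Function.iterate_succ_apply] using H m (by omega)

lemma isClosed_level (n : ℕ) : IsClosed (S.level n) := by
  induction n with
  | zero => simp [level]
  | succ n ih =>
    rw [level_succ]
    exact S.continuousOn_T.preimage_isClosed_of_isClosed S.isClosed_domain ih

lemma isCompact_repeller : IsCompact S.repeller := by
  have hEq : S.repeller = ⋂ n, S.level n := by
    ext x
    simp only [repeller, level, mem_ofPred_eq, mem_iInter]
    exact ⟨fun H n m _ => H m, fun H n => H (n + 1) n (by omega)⟩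
  refine isCompact_Icc.of_isClosed_subset ?_
    (S.repeller_subset_domain.trans S.domain_subset_unit)
  rw [hEq]
  exact isClosed_iInter S.isClosed_level

/-- Iterates of `T` up to time `n - 1` are continuous on `T^{-n}([0,1])`. -/
lemma continuousOn_iterate (n m : ℕ) (hm : m < n) : ContinuousOn S.T^[m] (S.level n) := by
  induction m with
  | zero => simpa using continuousOn_id
  | succ m ih =>
    rw [Function.iterate_succ']
    exact S.continuousOn_T.comp (ih (by omega)) fun y hy => hy m (by omega)

lemma same_interval_of_preconnected {A : Set ℝ} (hA : IsPreconnected A) (hAd : A ⊆ S.domain)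
    {a b : ℝ} (ha : a ∈ A) (hb : b ∈ A) {j : Fin S.k} (haj : a ∈ Icc (S.u j) (S.v j)) :
    b ∈ Icc (S.u j) (S.v j) := by
  by_contra hbj
  obtain ⟨i, hbi⟩ := mem_iUnion.1 (hAd hb)
  have key := isPreconnected_closed_iff.1 hA (Icc (S.u j) (S.v j))
    (⋃ i : {i // i ≠ j}, Icc (S.u i) (S.v i)) isClosed_Icc
    (isClosed_iUnion_of_finite fun _ => isClosed_Icc) ?_ ⟨a, ha, haj⟩ ⟨b, hb, ?_⟩
  · obtain ⟨z, -, hzj, hz⟩ := key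
    obtain ⟨⟨l, hl⟩, hzl⟩ := mem_iUnion.1 hz
    exact disjoint_left.1 (S.pair_disj hl) hzl hzj
  · intro z hz
    obtain ⟨l, hl⟩ := mem_iUnion.1 (hAd hz)
    by_cases hlj : l = j
    · exact Or.inl (hlj ▸ hl)
    · exact Or.inr (mem_iUnion.2 ⟨⟨l, hlj⟩, hl⟩)
  · exact mem_iUnion.2 ⟨⟨i, fun e => hbj (e ▸ hbi)⟩, hbi⟩

lemma sameItin_of_mem_component {n : ℕ} {x y : ℝ} (hx : x ∈ S.level n)
    (hy : y ∈ connectedComponentIn (S.level n) x) : S.SameItin n x y := by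
  intro m hm
  obtain ⟨j, hj⟩ := mem_iUnion.1 (hx m hm)
  refine ⟨j, hj, ?_⟩
  have hsub := connectedComponentIn_subset (S.level n) x
  refine S.same_interval_of_preconnected
    (isPreconnected_connectedComponentIn.image _ ((S.continuousOn_iterate n m hm).mono hsub)) ?_
    (mem_image_of_mem _ (mem_connectedComponentIn hx)) (mem_image_of_mem _ hy) hj
  rintro _ ⟨z, hz, rfl⟩
  exact hsub hz m hm

lemma T_mem_uIcc {j : Fin S.k} {a b w : ℝ} (ha : a ∈ Icc (S.u j) (S.v j))
    (hb : b ∈ Icc (S.u j) (S.v j)) (hw : w ∈ uIcc a b) : S.T w ∈ uIcc (S.T a) (S.T b) := by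
  have hsub : uIcc a b ⊆ Icc (S.u j) (S.v j) := ordConnected_Icc.uIcc_subset ha hb
  rcases ContinuousOn.strictMonoOn_of_injOn_Icc' (S.nondeg j).le
    (S.continuousOn_T.mono (S.Icc_subset_domain j)) (S.bijOn j).injOn with hm | hm
  · exact (hm.monotoneOn.mono hsub).mapsTo_uIcc hw
  · exact (hm.antitoneOn.mono hsub).mapsTo_uIcc hw

/-- Itinerary classes are convex. -/
lemma sameItin_of_mem_uIcc {n : ℕ} {x y w : ℝ} (hxy : S.SameItin n x y) (hw : w ∈ uIcc x y) :
    S.SameItin n x w := by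
  induction n generalizing x y w with
  | zero => intro m hm; omega
  | succ n ih =>
    rw [sameItin_succ] at hxy ⊢
    obtain ⟨⟨j, hx, hy⟩, H⟩ := hxy
    exact ⟨⟨j, hx, ordConnected_Icc.uIcc_subset hx hy hw⟩, ih H (S.T_mem_uIcc hx hy hw)⟩

lemma mem_component_of_sameItin {n : ℕ} {x y : ℝ} (hxy : S.SameItin n x y) :
    y ∈ connectedComponentIn (S.level n) x := by
  refine isPreconnected_uIcc.subset_connectedComponentIn (left_mem_uIcc (a := x) (b := y)) ?_
    right_mem_uIcc
  intro w hw m hm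
  obtain ⟨j, -, hj⟩ := S.sameItin_of_mem_uIcc hxy hw m hm
  exact S.Icc_subset_domain j hj

/-! ### Bounded distortion -/

lemma exists_deriv {j : Fin S.k} {x y : ℝ} (hx : x ∈ Icc (S.u j) (S.v j))
    (hy : y ∈ Icc (S.u j) (S.v j)) : ∃ ξ ∈ Icc (S.u j) (S.v j),
      |ξ - x| ≤ |y - x| ∧ |S.T y - S.T x| = |S.T' ξ| * |y - x| := by
  have aux : ∀ a b, a ∈ Icc (S.u j) (S.v j) → b ∈ Icc (S.u j) (S.v j) → a < b →
      ∃ ξ ∈ Ioo a b, |S.T b - S.T a| = |S.T' ξ| * |b - a| := by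
    intro a b ha hb hab
    obtain ⟨ξ, hξ, hs⟩ := exists_hasDerivAt_eq_slope S.T S.T' hab
      (S.continuousOn_T.mono ((Icc_subset_Icc ha.1 hb.2).trans (S.Icc_subset_domain j)))
      (fun z hz => (S.hasDeriv z (S.Icc_subset_domain j
        ⟨ha.1.trans hz.1.le, hz.2.le.trans hb.2⟩)).hasDerivAt
        (mem_of_superset (Icc_mem_nhds (ha.1.trans_lt hz.1) (hz.2.trans_le hb.2))
          (S.Icc_subset_domain j)))
    refine ⟨ξ, hξ, ?_⟩
    have hne : b - a ≠ 0 := (sub_pos.2 hab).ne'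
    rw [← abs_mul, hs, div_mul_cancel₀ _ hne]
  rcases lt_trichotomy x y with hlt | rfl | hlt
  · obtain ⟨ξ, hξ, H⟩ := aux x y hx hy hlt
    refine ⟨ξ, ⟨hx.1.trans hξ.1.le, hξ.2.le.trans hy.2⟩, ?_, H⟩
    rw [abs_of_pos (sub_pos.2 hξ.1), abs_of_pos (sub_pos.2 hlt)]
    linarith [hξ.2]
  · exact ⟨x, hx, by simp, by simp⟩
  · obtain ⟨ξ, hξ, H⟩ := aux y x hy hx hlt
    refine ⟨ξ, ⟨hy.1.trans hξ.1.le, hξ.2.le.trans hx.2⟩, ?_, ?_⟩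
    · rw [abs_of_neg (sub_neg.2 hξ.2), abs_of_neg (sub_neg.2 hlt)]
      linarith [hξ.1]
    · rw [abs_sub_comm, H, abs_sub_comm x y]

lemma dist_contract {n : ℕ} {x y : ℝ} (hxy : S.SameItin n x y) :
    |y - x| * S.lam ^ n ≤ |S.T^[n] y - S.T^[n] x| := by
  induction n generalizing x y with
  | zero => simp
  | succ n ih =>
    obtain ⟨⟨j, hx, hy⟩, H⟩ := S.sameItin_succ.1 hxy
    obtain ⟨ξ, hξ, -, hT⟩ := S.exists_deriv hx hy
    have h1 := ih H
    rw [Function.iterate_succ_apply, Function.iterate_succ_apply]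
    refine le_trans ?_ h1
    rw [hT, pow_succ]
    have h2 := S.expanding ξ (S.Icc_subset_domain j hξ)
    have h3 : 0 ≤ |y - x| * S.lam ^ n := mul_nonneg (abs_nonneg _) (pow_nonneg S.lam_pos.le n)
    nlinarith [mul_le_mul_of_nonneg_left h2 h3]

/-- The contraction factor `λ^{-ε}` governing the Hölder distortion per step. -/
noncomputable def q : ℝ := (S.lam⁻¹) ^ S.eps

/-- The distortion accumulated over the `n` steps of a common itinerary. -/
noncomputable def distortion (n : ℕ) : ℝ := S.Ceps * ∑ i ∈ Finset.range n, S.q ^ i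

lemma q_nonneg : 0 ≤ S.q := Real.rpow_nonneg (inv_nonneg.2 S.lam_pos.le) _

lemma q_lt_one : S.q < 1 :=
  Real.rpow_lt_one (inv_nonneg.2 S.lam_pos.le) (inv_lt_one_of_one_lt₀ S.one_lt_lam) S.eps_pos

lemma distortion_le (n : ℕ) : S.distortion n ≤ S.Ceps * (1 - S.q)⁻¹ := by
  refine mul_le_mul_of_nonneg_left ?_ S.Ceps_nonneg
  rw [← tsum_geometric_of_lt_one S.q_nonneg S.q_lt_one]
  exact (summable_geometric_of_lt_one S.q_nonneg S.q_lt_one).sum_le_tsum _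
    fun i _ => pow_nonneg S.q_nonneg i

lemma exp_phi {x : ℝ} (hx : x ∈ S.domain) : Real.exp (S.phi x) = |S.T' x|⁻¹ := by
  rw [phi, Real.exp_neg, Real.exp_log (S.lam_pos.trans_le (S.expanding x hx))]

lemma birkhoff_succ (f : ℝ → ℝ) (n : ℕ) (x : ℝ) :
    S.birkhoff f (n + 1) x = f x + S.birkhoff f n (S.T x) := by
  simp [birkhoff, Finset.sum_range_succ', Function.iterate_succ_apply, add_comm]

lemma deriv_compare {x y : ℝ} (hx : x ∈ S.domain) (hy : y ∈ S.domain) :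
    |S.T' x| ≤ |S.T' y| * Real.exp (S.Ceps * |x - y| ^ S.eps) := by
  have h1 := S.holder x hx y hy
  have h2 := (S.one_lt_lam.trans_le (S.expanding y hy)).le
  have h3 := abs_sub_abs_le_abs_sub (S.T' x) (S.T' y)
  have h4 := Real.add_one_le_exp (S.Ceps * |x - y| ^ S.eps)
  have h5 : 0 ≤ S.Ceps * |x - y| ^ S.eps :=
    mul_nonneg S.Ceps_nonneg (Real.rpow_nonneg (abs_nonneg _) _)
  nlinarith [mul_le_mul_of_nonneg_left h4 (zero_le_one.trans h2)]

/-- Bounded distortion: `|y - x|` is comparable to `e^{φⁿ(x)} |Tⁿ y - Tⁿ x|` along a common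
itinerary of length `n`. -/
lemma dist_bounds {n : ℕ} {x y : ℝ} (hxy : S.SameItin n x y)
    (hn : |S.T^[n] y - S.T^[n] x| ≤ 1) :
    |y - x| ≤ Real.exp (S.birkhoff S.phi n x + S.distortion n) * |S.T^[n] y - S.T^[n] x| ∧
    |S.T^[n] y - S.T^[n] x| * Real.exp (S.birkhoff S.phi n x - S.distortion n) ≤ |y - x| := by
  induction n generalizing x y with
  | zero => simp [birkhoff, distortion]
  | succ n ih =>
    obtain ⟨⟨j, hx, hy⟩, H⟩ := S.sameItin_succ.1 hxy
    obtain ⟨ξ, hξ, hξx, hT⟩ := S.exists_deriv hx hy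
    have hcon := S.dist_contract hxy
    rw [Function.iterate_succ_apply, Function.iterate_succ_apply] at *
    obtain ⟨h1, h2⟩ := ih H hn
    have hxd := S.Icc_subset_domain j hx
    have hξd := S.Icc_subset_domain j hξ
    have hxpos := S.lam_pos.trans_le (S.expanding x hxd)
    have hξpos := S.lam_pos.trans_le (S.expanding ξ hξd)
    -- The points start within `λ^{-(n+1)}` of each other; one factor is given away so that
    -- the error of this step is the term of index `n` in the geometric sum.
    have hclose : |ξ - x| ≤ (S.lam⁻¹) ^ n := by
      have hp : 0 < S.lam ^ n := pow_pos S.lam_pos n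
      have : |y - x| * S.lam ^ n ≤ 1 := by
        refine le_trans ?_ (hcon.trans hn)
        exact mul_le_mul_of_nonneg_left
          (pow_le_pow_right₀ S.one_lt_lam.le (Nat.le_succ n)) (abs_nonneg _)
      rw [inv_pow]
      refine hξx.trans ?_
      rwa [← one_div, le_div_iff₀ hp]
    have herr : S.Ceps * |ξ - x| ^ S.eps ≤ S.Ceps * S.q ^ n := by
      refine mul_le_mul_of_nonneg_left ?_ S.Ceps_nonneg
      refine (Real.rpow_le_rpow (abs_nonneg _) hclose S.eps_pos.le).trans_eq ?_
      rw [q, ← Real.rpow_natCast, ← Real.rpow_natCast, ← Real.rpow_mul (inv_nonneg.2 S.lam_pos.le),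
        ← Real.rpow_mul (inv_nonneg.2 S.lam_pos.le), mul_comm]
    have hc1 : |S.T' x| ≤ |S.T' ξ| * Real.exp (S.Ceps * S.q ^ n) := by
      refine (S.deriv_compare hxd hξd).trans ?_
      rw [abs_sub_comm]
      gcongr
    have hc2 : |S.T' ξ| ≤ |S.T' x| * Real.exp (S.Ceps * S.q ^ n) := by
      refine (S.deriv_compare hξd hxd).trans ?_
      gcongr
    have hd : S.distortion (n + 1) = S.Ceps * S.q ^ n + S.distortion n := by
      rw [distortion, distortion, Finset.sum_range_succ]; ring
    rw [birkhoff_succ, hd]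
    set E := Real.exp (S.Ceps * S.q ^ n) with hE
    set d := |S.T^[n] (S.T y) - S.T^[n] (S.T x)|
    have hEpos : 0 < E := Real.exp_pos _
    constructor
    · have e1 : Real.exp (S.phi x + S.birkhoff S.phi n (S.T x) + (S.Ceps * S.q ^ n + S.distortion n))
          = |S.T' x|⁻¹ * E * Real.exp (S.birkhoff S.phi n (S.T x) + S.distortion n) := by
        rw [← S.exp_phi hxd, hE, ← Real.exp_add, ← Real.exp_add]; ring_nf
      rw [e1, mul_assoc]
      refine le_trans ?_ (mul_le_mul_of_nonneg_left h1 (by positivity))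
      rw [hT, mul_assoc, inv_mul_eq_div, le_div_iff₀ hxpos]
      nlinarith [mul_le_mul_of_nonneg_right hc1 (abs_nonneg (y - x))]
    · have e1 : Real.exp (S.phi x + S.birkhoff S.phi n (S.T x) - (S.Ceps * S.q ^ n + S.distortion n))
          = Real.exp (S.birkhoff S.phi n (S.T x) - S.distortion n) * (|S.T' x|⁻¹ * E⁻¹) := by
        rw [← S.exp_phi hxd, hE, ← Real.exp_neg, ← Real.exp_add, ← Real.exp_add]; ring_nf
      rw [e1, ← mul_assoc]
      refine le_trans (mul_le_mul_of_nonneg_right h2 (by positivity)) ?_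
      rw [hT, ← mul_inv, ← div_eq_mul_inv, div_le_iff₀ (by positivity)]
      nlinarith [mul_le_mul_of_nonneg_right hc2 (abs_nonneg (y - x))]

/-! ### Scales -/

/-- The length scale `e^{φⁿ(x)}` of the level `n` basic set around `x`. -/
noncomputable def scale (x : ℝ) (n : ℕ) : ℝ := Real.exp (S.birkhoff S.phi n x)

lemma scale_pos (x : ℝ) (n : ℕ) : 0 < S.scale x n := Real.exp_pos _

lemma scale_zero (x : ℝ) : S.scale x 0 = 1 := by simp [scale, birkhoff]

lemma scale_succ {x : ℝ} (hx : x ∈ S.repeller) (n : ℕ) :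
    S.scale x (n + 1) = S.scale x n * |S.T' (S.T^[n] x)|⁻¹ := by
  rw [scale, scale, ← S.exp_phi (hx n), ← Real.exp_add, birkhoff, birkhoff, Finset.sum_range_succ]

lemma scale_succ_le {x : ℝ} (hx : x ∈ S.repeller) (n : ℕ) :
    S.scale x (n + 1) ≤ S.scale x n * S.lam⁻¹ := by
  rw [S.scale_succ hx]
  exact mul_le_mul_of_nonneg_left (inv_anti₀ S.lam_pos (S.expanding _ (hx n))) (S.scale_pos x n).le

lemma scale_antitone {x : ℝ} (hx : x ∈ S.repeller) : Antitone (S.scale x) :=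
  antitone_nat_of_succ_le fun n => (S.scale_succ_le hx n).trans
    (mul_le_of_le_one_right (S.scale_pos x n).le (inv_le_one_of_one_le₀ S.one_lt_lam.le))

lemma scale_le_pow {x : ℝ} (hx : x ∈ S.repeller) (n : ℕ) : S.scale x n ≤ (S.lam⁻¹) ^ n := by
  induction n with
  | zero => simp [scale_zero]
  | succ n ih =>
    rw [pow_succ]
    exact (S.scale_succ_le hx n).trans
      (mul_le_mul_of_nonneg_right ih (inv_nonneg.2 S.lam_pos.le))

lemma tendsto_scale {x : ℝ} (hx : x ∈ S.repeller) : Tendsto (S.scale x) atTop (𝓝 0) :=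
  squeeze_zero (fun n => (S.scale_pos x n).le) (S.scale_le_pow hx)
    (tendsto_pow_atTop_nhds_zero_of_lt_one (inv_nonneg.2 S.lam_pos.le)
      (inv_lt_one_of_one_lt₀ S.one_lt_lam))

lemma exists_deriv_bound : ∃ M, 0 < M ∧ ∀ x ∈ S.domain, |S.T' x| ≤ M := by
  have hk : 0 < S.k := by have := S.two_le_k; omega
  have h0 : S.u ⟨0, hk⟩ ∈ S.domain := S.Icc_subset_domain ⟨0, hk⟩ ⟨le_rfl, (S.nondeg _).le⟩
  have hp := S.lam_pos.trans_le (S.expanding _ h0)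
  refine ⟨|S.T' (S.u ⟨0, hk⟩)| + S.Ceps, by linarith [S.Ceps_nonneg], fun x hx => ?_⟩
  have h1 := S.holder x hx _ h0
  have h2 := abs_sub_abs_le_abs_sub (S.T' x) (S.T' (S.u ⟨0, hk⟩))
  have hxu := S.domain_subset_unit hx
  have h0u := S.domain_subset_unit h0
  have h3 : |x - S.u ⟨0, hk⟩| ^ S.eps ≤ 1 :=
    Real.rpow_le_one (abs_nonneg _)
      (abs_le.2 ⟨by linarith [hxu.1, h0u.2], by linarith [hxu.2, h0u.1]⟩) S.eps_pos.le
  nlinarith [mul_le_mul_of_nonneg_left h3 S.Ceps_nonneg]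

lemma exists_gap : ∃ g, 0 < g ∧ ∀ i j, i ≠ j → ∀ a ∈ Icc (S.u i) (S.v i),
    ∀ b ∈ Icc (S.u j) (S.v j), g ≤ |b - a| := by
  have key : ∀ᶠ g in 𝓝[>] (0:ℝ), ∀ i j, i ≠ j → ∀ a ∈ Icc (S.u i) (S.v i),
      ∀ b ∈ Icc (S.u j) (S.v j), g ≤ |b - a| := by
    refine eventually_all.2 fun i => eventually_all.2 fun j => ?_
    by_cases hij : i = j
    · exact Eventually.of_forall fun g h => absurd hij h
    obtain ⟨r, hr, H⟩ := Metric.exists_pos_forall_lt_edist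
      (isCompact_Icc (a := S.u i) (b := S.v i)) (isClosed_Icc (a := S.u j) (b := S.v j))
      (S.pair_disj hij)
    filter_upwards [Ioo_mem_nhdsGT (show (0:ℝ) < r by exact_mod_cast hr)] with g hg _ a ha b hb
    have h1 := H a ha b hb
    rw [edist_comm, edist_nndist, ENNReal.coe_lt_coe, ← NNReal.coe_lt_coe, coe_nndist,
      Real.dist_eq] at h1
    exact hg.2.le.trans h1.le
  obtain ⟨g, hg, H⟩ := ((eventually_mem_nhdsWithin (a := (0:ℝ)) (s := Ioi 0)).and key).exists
  exact ⟨g, hg, H⟩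

lemma abs_iterate_sub_le {x y : ℝ} (hx : x ∈ S.repeller) (hy : y ∈ S.repeller) (n : ℕ) :
    |S.T^[n] y - S.T^[n] x| ≤ 1 := by
  have h1 := S.domain_subset_unit (hx n)
  have h2 := S.domain_subset_unit (hy n)
  exact abs_le.2 ⟨by linarith [h1.2, h2.1], by linarith [h1.1, h2.2]⟩

/-- Points of `Λ` closer to `x` than a fixed multiple of the scale of level `n` share `n + 1`
symbols with `x`. -/
lemma sameItin_of_close {g : ℝ} (hgap : ∀ i j, i ≠ j → ∀ a ∈ Icc (S.u i) (S.v i),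
    ∀ b ∈ Icc (S.u j) (S.v j), g ≤ |b - a|) {x y : ℝ} (hx : x ∈ S.repeller)
    (hy : y ∈ S.repeller) (n : ℕ)
    (hclose : |y - x| < g * Real.exp (-(S.Ceps * (1 - S.q)⁻¹)) * S.scale x n) :
    S.SameItin (n + 1) x y := by
  intro m hm
  induction m using Nat.strong_induction_on with
  | _ m ih =>
    have hsame : S.SameItin m x y := fun l hl => ih l hl (by omega)
    obtain ⟨i, hi⟩ := mem_iUnion.1 (hx m)
    obtain ⟨j, hj⟩ := mem_iUnion.1 (hy m)
    by_cases hij : i = j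
    · exact ⟨i, hi, hij ▸ hj⟩
    exfalso
    have h1 := (S.dist_bounds hsame (S.abs_iterate_sub_le hx hy m)).2
    have h2 := hgap i j hij _ hi _ hj
    have h3 : Real.exp (-(S.Ceps * (1 - S.q)⁻¹)) * S.scale x n
        ≤ Real.exp (S.birkhoff S.phi m x - S.distortion m) := by
      have e : Real.exp (S.birkhoff S.phi m x - S.distortion m)
          = Real.exp (-S.distortion m) * S.scale x m := by
        rw [scale, ← Real.exp_add]; ring_nf
      rw [e]
      exact mul_le_mul (Real.exp_le_exp.2 (neg_le_neg (S.distortion_le m)))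
        (S.scale_antitone hx (by omega)) (S.scale_pos x n).le (Real.exp_pos _).le
    have h4 := mul_le_mul h2 h3
      (mul_nonneg (Real.exp_pos _).le (S.scale_pos x n).le) (abs_nonneg _)
    linarith

/-- The level `n ≥ 1` basic set around `x` has radius at most a fixed multiple of its scale. -/
lemma abs_sub_le_of_sameItin {x y : ℝ} {n : ℕ} (hn : 1 ≤ n) (hxy : S.SameItin n x y) :
    |y - x| ≤ Real.exp (S.Ceps * (1 - S.q)⁻¹) * S.scale x n := by
  have hd : |S.T^[n] y - S.T^[n] x| ≤ 1 := by
    obtain ⟨n, rfl⟩ := Nat.exists_eq_add_of_le' hn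
    obtain ⟨j, h1, h2⟩ := hxy n (by omega)
    have h1 := (S.bijOn j).mapsTo h1
    have h2 := (S.bijOn j).mapsTo h2
    rw [Function.iterate_succ_apply', Function.iterate_succ_apply']
    exact abs_le.2 ⟨by linarith [h1.2, h2.1], by linarith [h1.1, h2.2]⟩
  refine (S.dist_bounds hxy hd).1.trans ((mul_le_of_le_one_right (Real.exp_pos _).le hd).trans ?_)
  rw [scale, ← Real.exp_add, Real.exp_le_exp]
  linarith [S.distortion_le n]

/-! ### Measure of balls -/

lemma birkhoff_coboundary {ψ h : ℝ → ℝ} {δ : ℝ}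
    (hcoh : ∀ x ∈ S.repeller, ψ x - δ * S.phi x = h (S.T x) - h x) {x : ℝ}
    (hx : x ∈ S.repeller) (n : ℕ) :
    S.birkhoff ψ n x = δ * S.birkhoff S.phi n x + (h (S.T^[n] x) - h x) := by
  induction n with
  | zero => simp [birkhoff]
  | succ n ih =>
    have h1 := hcoh _ (S.iterate_mem_repeller hx n)
    rw [Function.iterate_succ_apply']
    simp only [birkhoff, Finset.sum_range_succ] at ih ⊢
    linarith

/-- Basic sets around `x` have measure comparable to the `δ`-th power of their scale. -/
lemma measure_basic {ψ h : ℝ → ℝ} {δ : ℝ} {μ : Measure ℝ} (hμ : S.IsGibbs ψ μ)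
    (hcont : ContinuousOn h S.repeller)
    (hcoh : ∀ x ∈ S.repeller, ψ x - δ * S.phi x = h (S.T x) - h x) {x : ℝ}
    (hx : x ∈ S.repeller) : ∃ C D : ℝ, 0 < C ∧ 0 < D ∧ ∀ n, 1 ≤ n →
      C * S.scale x n ^ δ ≤ (μ (connectedComponentIn (S.level n) x)).toReal ∧
      (μ (connectedComponentIn (S.level n) x)).toReal ≤ D * S.scale x n ^ δ := by
  obtain ⟨-, -, C, D, hC, hD, H⟩ := hμ
  obtain ⟨B, hB⟩ := S.isCompact_repeller.exists_bound_of_continuousOn hcont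
  refine ⟨C * Real.exp (-(2 * B)), D * Real.exp (2 * B), by positivity, by positivity,
    fun n hn => ?_⟩
  have hxl : x ∈ S.level n := fun m _ => hx m
  obtain ⟨h1, h2⟩ := H n hn _ ⟨x, hxl, rfl⟩ x ⟨mem_connectedComponentIn hxl, hx⟩
  have hb1 := abs_le.1 (hB _ hx)
  have hb2 := abs_le.1 (hB _ (S.iterate_mem_repeller hx n))
  have hs : S.scale x n ^ δ = Real.exp (δ * S.birkhoff S.phi n x) := by
    rw [scale, ← Real.exp_mul, mul_comm]
  rw [S.birkhoff_coboundary hcoh hx] at h1 h2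
  rw [hs, mul_assoc, mul_assoc, ← Real.exp_add, ← Real.exp_add]
  refine ⟨le_trans ?_ h1, h2.trans ?_⟩
  · exact mul_le_mul_of_nonneg_left (Real.exp_le_exp.2 (by linarith [hb1.2, hb2.1])) hC.le
  · exact mul_le_mul_of_nonneg_left (Real.exp_le_exp.2 (by linarith [hb1.1, hb2.2])) hD.le

/-- A null sequence starting above `r > 0` has a first term that is `≤ r`. -/
lemma exists_crossing {a : ℕ → ℝ} (ha : Tendsto a atTop (𝓝 0)) {r : ℝ} (hr : 0 < r)
    (h0 : r < a 0) : ∃ n, a (n + 1) ≤ r ∧ r < a n := by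
  classical
  have hex : ∃ n, a n ≤ r := ((ha.eventually_lt_const hr).exists).imp fun _ h => h.le
  obtain ⟨n, hn⟩ : ∃ n, Nat.find hex = n + 1 := by
    refine Nat.exists_eq_succ_of_ne_zero fun e => ?_
    have := Nat.find_spec hex
    rw [e] at this
    linarith
  refine ⟨n, hn ▸ Nat.find_spec hex, not_le.1 (Nat.find_min hex (by omega))⟩

/-- `μ (B_r x)` is comparable to `r ^ δ` for small `r`. -/
lemma measure_ball {ψ h : ℝ → ℝ} {δ : ℝ} (hδ : 0 ≤ δ) {μ : Measure ℝ} (hμ : S.IsGibbs ψ μ)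
    (hcont : ContinuousOn h S.repeller)
    (hcoh : ∀ x ∈ S.repeller, ψ x - δ * S.phi x = h (S.T x) - h x) {x : ℝ}
    (hx : x ∈ S.repeller) : ∃ C D : ℝ, 0 < C ∧ 0 < D ∧ ∀ᶠ r in 𝓝[>] (0:ℝ),
      C * r ^ δ ≤ (μ (Metric.ball x r)).toReal ∧ (μ (Metric.ball x r)).toReal ≤ D * r ^ δ := by
  obtain ⟨C, D, hC, hD, H⟩ := S.measure_basic hμ hcont hcoh hx
  obtain ⟨hprob, hnull, -⟩ := hμ
  obtain ⟨M, hM, hMb⟩ := S.exists_deriv_bound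
  obtain ⟨g, hg, hgap⟩ := S.exists_gap
  set c := g * Real.exp (-(S.Ceps * (1 - S.q)⁻¹)) with hc
  -- Twice the distortion constant, so that basic sets lie strictly inside open balls.
  set b := 2 * Real.exp (S.Ceps * (1 - S.q)⁻¹) with hb
  have hcpos : 0 < c := by positivity
  have hbpos : 0 < b := by positivity
  refine ⟨C * ((M * b)⁻¹) ^ δ, D * (c⁻¹) ^ δ, by positivity, by positivity, ?_⟩
  filter_upwards [Ioo_mem_nhdsGT (lt_min hcpos hbpos)] with r hr
  have hr0 : 0 < r := hr.1
  constructor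
  · obtain ⟨n, hn1, hn2⟩ := exists_crossing (a := fun n => b * S.scale x n)
      (by simpa using (S.tendsto_scale hx).const_mul b) hr0
      (by simpa [scale_zero] using hr.2.trans_le (min_le_right _ _))
    have hsub : connectedComponentIn (S.level (n + 1)) x ⊆ Metric.ball x r := by
      intro y hy
      have h1 := S.abs_sub_le_of_sameItin (by omega)
        (S.sameItin_of_mem_component (fun m _ => hx m) hy)
      have h2 : 0 < Real.exp (S.Ceps * (1 - S.q)⁻¹) * S.scale x (n + 1) :=
        mul_pos (Real.exp_pos _) (S.scale_pos x _)
      rw [Metric.mem_ball, Real.dist_eq]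
      simp only [hb] at hn1
      linarith
    refine le_trans ?_ (ENNReal.toReal_mono (measure_ne_top μ _) (measure_mono hsub))
    refine le_trans ?_ (H (n + 1) (by omega)).1
    rw [mul_assoc, ← Real.mul_rpow (by positivity) hr0.le]
    refine mul_le_mul_of_nonneg_left (Real.rpow_le_rpow (by positivity) ?_ hδ) hC.le
    rw [S.scale_succ hx, inv_mul_le_iff₀ (by positivity)]
    have h3 := hMb _ (hx n)
    have h4 := S.lam_pos.trans_le (S.expanding _ (hx n))
    have h5 : 1 ≤ M * |S.T' (S.T^[n] x)|⁻¹ := by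
      rw [← div_eq_mul_inv, one_le_div h4]; exact h3
    have h6 : 0 < b * S.scale x n := mul_pos hbpos (S.scale_pos x n)
    nlinarith [mul_le_mul_of_nonneg_left h5 h6.le]
  · obtain ⟨n, hn1, hn2⟩ := exists_crossing (a := fun n => c * S.scale x n)
      (by simpa using (S.tendsto_scale hx).const_mul c) hr0
      (by simpa [scale_zero] using hr.2.trans_le (min_le_left _ _))
    have hsub : Metric.ball x r ⊆ connectedComponentIn (S.level (n + 1)) x ∪ S.repellerᶜ := by
      intro y hy
      by_cases hyr : y ∈ S.repeller
      · refine Or.inl (S.mem_component_of_sameItin (S.sameItin_of_close hgap hx hyr n ?_))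
        rw [Metric.mem_ball, Real.dist_eq] at hy
        exact hy.trans hn2
      · exact Or.inr hyr
    have hle : μ (Metric.ball x r) ≤ μ (connectedComponentIn (S.level (n + 1)) x) := by
      refine (measure_mono hsub).trans ((measure_union_le _ _).trans ?_)
      rw [hnull, add_zero]
    refine (ENNReal.toReal_mono (measure_ne_top μ _) hle).trans ?_
    refine (H (n + 1) (by omega)).2.trans ?_
    rw [mul_assoc, ← Real.mul_rpow (by positivity) hr0.le]
    refine mul_le_mul_of_nonneg_left (Real.rpow_le_rpow (S.scale_pos x _).le ?_ hδ) hD.le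
    rw [inv_mul_eq_div, le_div_iff₀ hcpos, mul_comm]
    exact hn1

end CookieCutter

lemma tendsto_log_div_log {m : ℝ → ℝ} {δ C D : ℝ} (hC : 0 < C) (hD : 0 < D)
    (H : ∀ᶠ r in 𝓝[>] (0:ℝ), C * r ^ δ ≤ m r ∧ m r ≤ D * r ^ δ) :
    Tendsto (fun r => Real.log (m r) / Real.log r) (𝓝[>] 0) (𝓝 δ) := by
  have lim : ∀ A : ℝ, Tendsto (fun r => A / Real.log r + δ) (𝓝[>] 0) (𝓝 δ) := fun A => by
    simpa using (Real.tendsto_log_nhdsGT_zero.const_div_atBot A).add_const δ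
  have hsmall : ∀ᶠ r in 𝓝[>] (0:ℝ), r ∈ Ioo (0:ℝ) 1 := Ioo_mem_nhdsGT one_pos
  have hlog : ∀ (A r : ℝ), 0 < A → 0 < r → Real.log (A * r ^ δ) = Real.log A + δ * Real.log r :=
    fun A r hA hr => by
      rw [Real.log_mul hA.ne' (Real.rpow_pos_of_pos hr δ).ne', Real.log_rpow hr]
  refine tendsto_of_tendsto_of_tendsto_of_le_of_le' (lim (Real.log D)) (lim (Real.log C)) ?_ ?_
  · filter_upwards [H, hsmall] with r ⟨h1, h2⟩ hr
    have hneg : Real.log r < 0 := Real.log_neg hr.1 hr.2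
    have hp : 0 < C * r ^ δ := mul_pos hC (Real.rpow_pos_of_pos hr.1 δ)
    have h3 := Real.log_le_log (hp.trans_le h1) h2
    rw [hlog D r hD hr.1] at h3
    rw [div_add' _ _ _ hneg.ne]
    exact div_le_div_of_nonpos_of_le hneg.le h3
  · filter_upwards [H, hsmall] with r ⟨h1, h2⟩ hr
    have hneg : Real.log r < 0 := Real.log_neg hr.1 hr.2
    have hp : 0 < C * r ^ δ := mul_pos hC (Real.rpow_pos_of_pos hr.1 δ)
    have h3 := Real.log_le_log hp h1
    rw [hlog C r hC hr.1] at h3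
    rw [div_add' _ _ _ hneg.ne]
    exact div_le_div_of_nonpos_of_le hneg.le h3

/-- If `ψ - δφ` is cohomologous to zero, where `δ` is the Hausdorff dimension of
the repeller, then the local dimension of the Gibbs measure `μ` exists and equals
`δ` at every point of the repeller. -/
theorem localDim_eq_dimH_of_cohomologous (S : CookieCutter) (ψ : ℝ → ℝ)
    (hψ : CookieCutter.IsHolderOn ψ S.repeller)
    (μ : Measure ℝ) (hμ : S.IsGibbs ψ μ)
    (h : ℝ → ℝ) (hcont : ContinuousOn h S.repeller)
    (hcoh : ∀ x ∈ S.repeller,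
      ψ x - (dimH S.repeller).toReal * S.phi x = h (S.T x) - h x) :
    ∀ x ∈ S.repeller,
      Filter.Tendsto (fun r : ℝ => Real.log (μ (Metric.ball x r)).toReal / Real.log r)
        (nhdsWithin 0 (Set.Ioi 0)) (nhds ((dimH S.repeller).toReal)) := by
  intro x hx
  obtain ⟨C, D, hC, hD, H⟩ := S.measure_ball ENNReal.toReal_nonneg hμ hcont hcoh hx
  exact tendsto_log_div_log hC hD H
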